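/- arXiv:1406.3731 — 2 statements merged into one kernel-verified Lean document; each statement's English description precedes it below -/
import Mathlib

section
/- Let R be a ring and let A and B be R-modules such that, for every positive integer m, both the kernel and the cokernel of the multiplication-by-m map b ↦ mb from B to B are finite. Let 0 → B → E → A → 0 be an extension of R-modules and let ξ be the corresponding element of Ext^1_R(A,B). Then ξ has finite order in Ext^1_R(A,B) if and only if E has an R-submodule X such that B ∩ X and E/(B + X) are both finite. -/
/-!
Statement 7: Proposition 2.2 on near splittings.  The element of `Ext^1_R(A, B)`
corresponding to an extension `0 → B → E → A → 0` is the class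
`hS.extClass : Ext A B 1` attached to the short exact sequence.  (The instance
hypothesis `HasExt` is a provable smallness condition on the `Ext` groups of the
category of `R`-modules.)
-/

open CategoryTheory Abelian

noncomputable section

/-- `m • ξ` is the Yoneda product of `ξ` with multiplication by `m`. -/
lemma nsmul_eq_comp_mk0 {R : Type} [Ring R] [HasExt.{0} (ModuleCat.{0} R)]
    {A B : ModuleCat.{0} R} (x : Ext A B 1) (m : ℕ) :
    m • x = x.comp (Ext.mk₀ (m • 𝟙 B)) (add_zero 1) := by
  induction m with
  | zero => simp
  | succ k ih => rw [succ_nsmul, succ_nsmul, Ext.mk₀_add, Ext.comp_add, ← ih, Ext.comp_mk₀_id]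

/-- The class has finite order iff multiplication by some `m > 0` on `B` extends to `E`. -/
lemma finite_order_iff_extends (R : Type) [Ring R]
    [HasExt.{0} (ModuleCat.{0} R)]
    (B E A : ModuleCat.{0} R) (i : B ⟶ E) (p : E ⟶ A) (w : i ≫ p = 0)
    (hS : (ShortComplex.mk i p w).ShortExact) :
    IsOfFinAddOrder hS.extClass ↔
      ∃ m : ℕ, 0 < m ∧ ∃ f : E →ₗ[R] B, ∀ b : B, f (i.hom b) = m • b := by
  rw [isOfFinAddOrder_iff_nsmul_eq_zero]
  refine exists_congr fun m => and_congr_right fun _ => ?_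
  rw [nsmul_eq_comp_mk0]
  constructor
  · intro h
    obtain ⟨x, hx⟩ := Ext.contravariant_sequence_exact₁ hS B _ _ h
    obtain ⟨f, rfl⟩ := (Ext.mk₀_bijective _ _).2 x
    rw [Ext.mk₀_comp_mk₀] at hx
    have h2 := (Ext.mk₀_bijective _ _).1 hx
    refine ⟨f.hom, fun b => ?_⟩
    have h3 := congrArg (fun g => g.hom b) h2
    simpa using h3
  · rintro ⟨f, hf⟩
    have h2 : m • 𝟙 B = i ≫ ModuleCat.ofHom f := by
      ext b
      simp [hf]
    rw [h2, ← Ext.mk₀_comp_mk₀]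
    exact ShortComplex.ShortExact.extClass_comp_assoc hS _

/-- The module-theoretic content of the forward direction. -/
lemma near_splitting_of_extends {R B E : Type} [Ring R] [AddCommGroup B] [AddCommGroup E]
    [Module R B] [Module R E] (i : B →ₗ[R] E) (m : ℕ)
    (hker : ({b : B | m • b = 0} : Set B).Finite)
    (hcoker : Finite (B ⧸ (AddMonoidHom.range ((zsmulAddGroupHom (m : ℤ)) : B →+ B))))
    (f : E →ₗ[R] B) (hf : ∀ b, f (i b) = m • b) :
    ((LinearMap.range i ⊓ LinearMap.ker f : Submodule R E) : Set E).Finite ∧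
      Finite (E ⧸ (LinearMap.range i ⊔ LinearMap.ker f : Submodule R E)) := by
  constructor
  · refine (hker.image i).subset ?_
    rintro _ ⟨⟨b, rfl⟩, hb⟩
    refine ⟨b, ?_, rfl⟩
    have h2 : f (i b) = 0 := hb
    rwa [hf] at h2
  · refine Finite.of_injective (β := B ⧸ (AddMonoidHom.range
      ((zsmulAddGroupHom (m : ℤ)) : B →+ B)))
      (fun q => QuotientAddGroup.mk (f (Quotient.out q))) ?_
    intro q q' h
    obtain ⟨b, hb⟩ := QuotientAddGroup.eq.1 h
    have hbm : m • b = -f (Quotient.out q) + f (Quotient.out q') := by simpa using hb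
    rw [← Quotient.out_eq q, ← Quotient.out_eq q']
    refine Eq.symm ((Submodule.Quotient.eq _).2 ?_)
    have : Quotient.out q' - Quotient.out q =
        i b + (Quotient.out q' - Quotient.out q - i b) := by abel
    rw [this]
    refine Submodule.add_mem_sup ⟨b, rfl⟩ ?_
    rw [LinearMap.mem_ker, map_sub, map_sub, hf, hbm]
    abel

/-- The module-theoretic content of the converse direction. -/
lemma extends_of_near_splitting {R B E : Type} [Ring R] [AddCommGroup B] [AddCommGroup E]
    [Module R B] [Module R E] (i : B →ₗ[R] E) (hi : Function.Injective i) (X : Submodule R E)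
    (h1 : ((LinearMap.range i ⊓ X : Submodule R E) : Set E).Finite)
    (h2 : Finite (E ⧸ (LinearMap.range i ⊔ X : Submodule R E))) :
    ∃ m : ℕ, 0 < m ∧ ∃ f : E →ₗ[R] B, ∀ b : B, f (i b) = m • b := by
  have hfin : Finite (LinearMap.range i ⊓ X : Submodule R E) := h1.to_subtype
  obtain ⟨n, hn, hn0⟩ : ∃ n : ℕ, 0 < n ∧ ∀ b : B, i b ∈ X → n • b = 0 := by
    refine ⟨Nat.card (LinearMap.range i ⊓ X : Submodule R E), Nat.card_pos, fun b hb => ?_⟩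
    have := card_nsmul_eq_zero' (x := (⟨i b, ⟨b, rfl⟩, hb⟩ : (LinearMap.range i ⊓ X : Submodule R E)))
    apply hi
    simpa using congrArg Subtype.val this
  obtain ⟨k, hk, hk0⟩ : ∃ k : ℕ, 0 < k ∧ ∀ e : E, ∃ b : B, k • e - i b ∈ X := by
    refine ⟨Nat.card (E ⧸ (LinearMap.range i ⊔ X : Submodule R E)), Nat.card_pos, fun e => ?_⟩
    have := card_nsmul_eq_zero' (x := (Submodule.Quotient.mk e :
      E ⧸ (LinearMap.range i ⊔ X : Submodule R E)))
    rw [← Submodule.Quotient.mk_smul, Submodule.Quotient.mk_eq_zero] at this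
    obtain ⟨_, ⟨b, rfl⟩, x, hx, hbx⟩ := Submodule.mem_sup.1 this
    exact ⟨b, by rw [← hbx]; simpa using hx⟩
  choose g hg using hk0
  have key : ∀ (e : E) (b : B), k • e - i b ∈ X → n • g e = n • b := by
    intro e b hb
    rw [← sub_eq_zero, ← smul_sub]
    apply hn0
    have := X.sub_mem hb (hg e)
    rw [map_sub]
    convert this using 1
    abel
  refine ⟨n * k, Nat.mul_pos hn hk, ⟨⟨fun e => n • g e, ?_⟩, ?_⟩, ?_⟩
  · intro e e'
    rw [← smul_add]
    apply key
    have := X.add_mem (hg e) (hg e')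
    rw [map_add, smul_add]
    convert this using 1
    abel
  · intro r e
    change n • g (r • e) = r • (n • g e)
    rw [smul_comm r n]
    apply key
    have := X.smul_mem r (hg e)
    rwa [smul_sub, smul_comm r k, ← map_smul] at this
  · intro b
    change n • g (i b) = _
    rw [mul_smul]
    apply key
    simp

/-- **Proposition 2.2.**  Let `R` be a ring and let `A` and `B` be `R`-modules
such that for every positive integer `m` both the kernel and the cokernel of
multiplication by `m` on `B` are finite.  Let `0 → B → E → A → 0` be an
extension of `R`-modules with class `ξ ∈ Ext^1_R(A, B)`.  Then `ξ` has finite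
order if and only if `E` has a submodule `X` such that `B ∩ X` and `E/(B + X)`
are finite. -/
theorem extension_class_finite_order_iff (R : Type) [Ring R]
    [HasExt.{0} (ModuleCat.{0} R)]
    (B E A : ModuleCat.{0} R) (i : B ⟶ E) (p : E ⟶ A) (w : i ≫ p = 0)
    (hS : (ShortComplex.mk i p w).ShortExact)
    (hker : ∀ m : ℕ, 0 < m → ({b : (B : Type) | m • b = 0} : Set B).Finite)
    (hcoker : ∀ m : ℕ, 0 < m →
      Finite ((B : Type) ⧸ (AddMonoidHom.range
        ((zsmulAddGroupHom (m : ℤ)) : (B : Type) →+ (B : Type))))) :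
    IsOfFinAddOrder hS.extClass ↔
      ∃ X : Submodule R E,
        ((LinearMap.range i.hom ⊓ X : Submodule R E) : Set E).Finite ∧
        Finite ((E : Type) ⧸ (LinearMap.range i.hom ⊔ X : Submodule R E)) := by
  rw [finite_order_iff_extends]
  constructor
  · rintro ⟨m, hm, f, hf⟩
    exact ⟨LinearMap.ker f, near_splitting_of_extends i.hom m (hker m hm) (hcoker m hm) f hf⟩
  · rintro ⟨X, h1, h2⟩
    exact extends_of_near_splitting i.hom hS.moduleCat_injective_f X h1 h2

end
end

section
/- Let π be a set of primes and G an abelian group. Let B be a ℤG-module whose underlying additive group is torsion-free of finite rank, and suppose that B has no nontrivial ℤG-submodule whose underlying abelian group is π-spectral. If A is a ℤG-module belonging to the class 𝔠(G,π) and B̄ is any ℤG-module quotient of B, then Ext^n_{ℤG}(A,B̄) and Tor_n^{ℤG}(A,B̄) are bounded ℤ-modules for all n ≥ 0. -/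
/-!
Statement 10: Lemma 3.3 of the paper.  Ext^n_{ℤG}(A, B̄) is the Ext group in
the abelian category Rep ℤ G of ℤG-modules, and Tor_n^{ℤG}(A, B̄) is the Tor
object in the category of modules over the (commutative) group ring ℤG,
computed after transporting along the equivalence Rep ℤ G ≌ ModuleCat ℤG.
-/

open CategoryTheory

noncomputable section




/-- The rational circle `ℚ/ℤ`. -/
abbrev RatCircle : Type := ℚ ⧸ AddSubgroup.zmultiples (1 : ℚ)

/-- The quasicyclic (Prüfer) `p`-group, realized as the `p`-primary part of `ℚ/ℤ`. -/
def pruferSubgroup (p : ℕ) : AddSubgroup RatCircle where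
  carrier := {x | ∃ n : ℕ, (p ^ n : ℕ) • x = 0}
  zero_mem' := ⟨0, smul_zero _⟩
  add_mem' := by
    rintro a b ⟨m, hm⟩ ⟨n, hn⟩
    refine ⟨m + n, ?_⟩
    have ha : (p ^ m * p ^ n) • a = 0 := by rw [mul_comm, mul_smul, hm, smul_zero]
    have hb : (p ^ m * p ^ n) • b = 0 := by rw [mul_smul, hn, smul_zero]
    rw [smul_add, pow_add, ha, hb, add_zero]
  neg_mem' := by
    rintro a ⟨m, hm⟩
    exact ⟨m, by rw [smul_neg, hm, neg_zero]⟩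

/-- A group has a quasicyclic `p`-section if some quotient of a subgroup is
isomorphic to the Prüfer `p`-group. -/
def HasQuasicyclicSection (G : Type*) [Group G] (p : ℕ) : Prop :=
  ∃ (H : Subgroup G) (K : Subgroup H) (_ : K.Normal),
    Nonempty ((H ⧸ K) ≃* Multiplicative (pruferSubgroup p))

/-- The spectrum of a group: the set of primes `p` such that the group has a
section isomorphic to the quasicyclic `p`-group. -/
def groupSpectrum (G : Type*) [Group G] : Set ℕ :=
  {p | p.Prime ∧ HasQuasicyclicSection G p}

/-- The spectrum of an (additive) abelian group, via `Multiplicative`. -/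
abbrev addSpectrum (A : Type*) [AddGroup A] : Set ℕ :=
  groupSpectrum (Multiplicative A)

/-- An abelian group has finite rank if its torsion-free rank and all of its
`p`-ranks are finite. -/
def FiniteRankAbelian (A : Type*) [AddCommGroup A] : Prop :=
  (∃ n : ℕ, ∀ k : ℕ, (∃ f : (Fin k →₀ ℤ) →+ A, Function.Injective f) → k ≤ n) ∧
  ∀ p : ℕ, p.Prime → {a : A | (p : ℕ) • a = 0}.Finite

/-- A group has finite rank (in the sense appropriate for abelian groups:
finite torsion-free rank and finite `p`-ranks). -/
def FiniteRankGroup (G : Type*) [Group G] : Prop :=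
  (∃ n : ℕ, ∀ k : ℕ,
    (∃ f : Multiplicative (Fin k →₀ ℤ) →* G, Function.Injective f) → k ≤ n) ∧
  ∀ p : ℕ, p.Prime → {g : G | g ^ p = 1}.Finite

/-- A solvable group of finite rank: a solvable group all of whose abelian
sections have finite rank. -/
def SolvableOfFiniteRank (G : Type*) [Group G] : Prop :=
  IsSolvable G ∧
    ∀ (H : Subgroup G) (K : Subgroup H) (_ : K.Normal),
      (∀ x y : H ⧸ K, x * y = y * x) → FiniteRankGroup (H ⧸ K)

/-- A group is virtually abelian. -/
def VirtuallyAbelian (G : Type*) [Group G] : Prop :=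
  ∃ H : Subgroup G, H.index ≠ 0 ∧ ∀ x y : H, x * y = y * x

/-- Mathlib's former `AddMonoid.IsTorsionFree`: no nonzero element has finite
additive order. -/
def AddMonoid.IsTorsionFree (G : Type*) [AddMonoid G] : Prop :=
  ∀ g : G, g ≠ 0 → ¬IsOfFinAddOrder g

/-- A `ℤG`-module (given as an object of `Rep ℤ G`) whose underlying abelian group
is torsion-free, of finite rank, and `π`-spectral. -/
def NiceRep {G : Type} [Group G] (π : Set ℕ) (M : Rep.{0} ℤ G) : Prop :=
  AddMonoid.IsTorsionFree M ∧ FiniteRankAbelian M ∧ addSpectrum M ⊆ π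

/-- The class `𝒰` of solvable groups of finite rank. -/
def MemClassU (G : Type) [Group G] : Prop :=
  SolvableOfFiniteRank G ∧
  ∃ (N : Subgroup G) (_ : N.Normal),
    Group.IsNilpotent N ∧
    Group.FG (G ⧸ N) ∧ VirtuallyAbelian (G ⧸ N) ∧
    ∃ (r : ℕ) (T : Fin (r + 1) → Subgroup G),
      Monotone T ∧ T 0 = ⊥ ∧
      ((T (Fin.last r) : Set G) = {g : G | g ∈ N ∧ IsOfFinOrder g}) ∧
      (∀ (i : Fin (r + 1)) (g t : G), t ∈ T i → g * t * g⁻¹ ∈ T i) ∧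
      (∀ (i : Fin r) (n t : G), n ∈ N → t ∈ T i.succ →
        n * t * n⁻¹ * t⁻¹ ∈ T i.castSucc) ∧
      (∀ i : Fin r, (T i.castSucc).relIndex (T i.succ) = 0 →
        ∃ M : Rep.{0} ℤ (G ⧸ N), NiceRep (groupSpectrum G) M ∧
          ∃ φ : M → G,
            (∀ m : M, φ m ∈ T i.succ) ∧
            (∀ m m' : M, (φ (m + m'))⁻¹ * (φ m * φ m') ∈ T i.castSucc) ∧
            (∀ t : G, t ∈ T i.succ → ∃ m : M, (φ m)⁻¹ * t ∈ T i.castSucc) ∧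
            (∀ (g : G) (m : M),
              (φ (M.ρ (QuotientGroup.mk g) m))⁻¹ * (g * φ m * g⁻¹) ∈ T i.castSucc))

/-- The class `𝔠(G, π)`: the smallest class of `ℤG`-modules containing every
finite `ℤG`-module and every `ℤG`-module whose underlying abelian group is
torsion-free of finite rank and `π`-spectral, and closed under forming
`ℤG`-module quotients and extensions. -/
inductive MemC (G : Type) [Group G] (π : Set ℕ) : Rep ℤ G → Prop
  | of_finite (A : Rep ℤ G) (h : Finite (A : Type)) : MemC G π A
  | of_nice (A : Rep ℤ G) (h : NiceRep π A) : MemC G π A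
  | quot (A B : Rep ℤ G) (f : A ⟶ B) (hf : Function.Surjective f.hom)
      (hA : MemC G π A) : MemC G π B
  | ext (A B C : Rep ℤ G) (f : A ⟶ B) (g : B ⟶ C)
      (hinj : Function.Injective f.hom) (hsurj : Function.Surjective g.hom)
      (hexact : ∀ b : (B : Type), g.hom b = 0 ↔ ∃ a : (A : Type), f.hom a = b)
      (hA : MemC G π A) (hC : MemC G π C) : MemC G π B


/-- The image of a representation of `G` in the category of modules over the
group ring `ℤG`. -/
def toMod {G : Type} [Group G] (A : Rep.{0} ℤ G) : ModuleCat.{0} (MonoidAlgebra ℤ G) :=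
  (Rep.equivalenceModuleMonoidAlgebra.functor).obj A

/-- A bounded `ℤ`-module: some nonzero integer annihilates it. -/
def ZBounded (A : Type*) [AddCommGroup A] : Prop :=
  ∃ m : ℤ, m ≠ 0 ∧ ∀ a : A, m • a = 0

section algebra
open TensorProduct

theorem lemB {S V : Type*} [CommRing S] [AddCommGroup V] [Module S V] [IsArtinian S V]
    [IsNoetherian S V] (P : Ideal S) (hP : P.IsMaximal)
    (h : ∀ s : S, (∀ v : V, s • v = 0) → s ∈ P) :
    ∃ v : V, v ≠ 0 ∧ ∀ s : S, s • v = 0 ↔ s ∈ P := by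
  have hPp := hP.isPrime
  obtain ⟨N, hN, hmin⟩ := (wellFounded_lt (α := Submodule S V)).has_min
    {N | ∀ s : S, (∀ v ∈ N, s • v = 0) → s ∈ P} ⟨⊤, fun s hs => h s fun v => hs v trivial⟩
  have key : ∀ t ∈ P, ∀ v ∈ N, t • v = 0 := by
    intro t ht
    have h1 : ∃ u, u ∉ P ∧ ∀ v ∈ N, (u * t) • v = 0 := by
      by_contra! hcon
      have hmem : N.map (LinearMap.lsmul S V t) ∈
          {N : Submodule S V | ∀ s : S, (∀ v ∈ N, s • v = 0) → s ∈ P} := by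
        intro s hs
        by_contra hsP
        obtain ⟨v, hv, hne⟩ := hcon s hsP
        apply hne
        rw [mul_smul]
        exact hs _ ⟨v, hv, rfl⟩
      have hle : N.map (LinearMap.lsmul S V t) ≤ N := by
        rintro _ ⟨v, hv, rfl⟩
        exact N.smul_mem t hv
      have heq : N.map (LinearMap.lsmul S V t) = N := by
        by_contra hne
        exact hmin _ hmem (lt_of_le_of_ne hle hne)
      have hin : N ≤ P • N := by
        intro x hx
        rw [← heq] at hx
        obtain ⟨v, hv, rfl⟩ := hx
        exact Submodule.smul_mem_smul ht hv
      obtain ⟨r, hr, hr0⟩ := Submodule.exists_sub_one_mem_and_smul_eq_zero_of_fg_of_le_smul P N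
        (IsNoetherian.noetherian N) hin
      have := hN r hr0
      apply hP.ne_top
      rw [Ideal.eq_top_iff_one]
      simpa using P.sub_mem this hr
    obtain ⟨u, hu, hut⟩ := h1
    have hmem : N.map (LinearMap.lsmul S V u) ∈
          {N : Submodule S V | ∀ s : S, (∀ v ∈ N, s • v = 0) → s ∈ P} := by
      intro s hs
      have : s * u ∈ P := hN _ fun v hv => by
        rw [mul_smul]; exact hs _ ⟨v, hv, rfl⟩
      exact (hPp.mem_or_mem this).resolve_right hu
    have hle : N.map (LinearMap.lsmul S V u) ≤ N := by
      rintro _ ⟨v, hv, rfl⟩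
      exact N.smul_mem u hv
    have heq : N.map (LinearMap.lsmul S V u) = N := by
      by_contra hne
      exact hmin _ hmem (lt_of_le_of_ne hle hne)
    intro v hv
    rw [← heq] at hv
    obtain ⟨w, hw, rfl⟩ := hv
    have := hut w hw
    rw [mul_comm, mul_smul] at this
    exact this
  have hne : ∃ v ∈ N, v ≠ 0 := by
    by_contra! hcon
    apply hP.ne_top
    rw [Ideal.eq_top_iff_one]
    exact hN 1 fun v hv => by rw [hcon v hv, smul_zero]
  obtain ⟨v, hv, hv0⟩ := hne
  refine ⟨v, hv0, fun s => ⟨fun hs => ?_, fun hs => key s hs v hv⟩⟩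
  by_contra hsP
  obtain ⟨y, z, hz, hyz⟩ := hP.exists_inv hsP
  apply hv0
  calc v = (y * s + z) • v := by rw [hyz, one_smul]
    _ = 0 := by rw [add_smul, mul_smul, hs, smul_zero, key z hz v hv, add_zero]

/-- the rational action -/
theorem exists_ratAction (R A : Type) [CommRing R] [AddCommGroup A] [Module R A] :
    ∃ φ : (ℚ ⊗[ℤ] R) →ₐ[ℚ] Module.End ℚ (ℚ ⊗[ℤ] A),
      ∀ (r : R) (a : A), φ (1 ⊗ₜ r) (1 ⊗ₜ a) = 1 ⊗ₜ (r • a) := by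
  let f : R →ₐ[ℤ] Module.End ℚ (ℚ ⊗[ℤ] A) :=
    ((Module.End.baseChangeHom ℤ ℚ A).restrictScalars ℤ).comp
      (Module.toModuleEnd ℤ (S := R) A : R →+* Module.End ℤ A).toIntAlgHom
  refine ⟨Algebra.TensorProduct.lift (Algebra.ofId ℚ _) f
    (fun x y => Algebra.commutes x (f y)), fun r a => ?_⟩
  refine (LinearMap.congr_fun (Algebra.TensorProduct.lift_tmul (Algebra.ofId ℚ _) f
    (fun x y => Algebra.commutes x (f y)) 1 r) _).trans ?_
  rw [map_one, one_mul]
  exact LinearMap.baseChange_tmul ..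

theorem finite_rat {A : Type} [AddCommGroup A] (n : ℕ)
    (h : ∀ k : ℕ, (∃ f : (Fin k →₀ ℤ) →+ A, Function.Injective f) → k ≤ n) :
    Module.Finite ℚ (ℚ ⊗[ℤ] A) := by
  have h1 : Module.rank ℤ A ≤ n := by
    apply rank_le
    intro s hs
    apply h
    have e : Fin s.card ≃ s := s.equivFin.symm
    have := hs.comp e e.injective
    exact ⟨(Finsupp.linearCombination ℤ _).toAddMonoidHom, this⟩
  have h2 : Module.rank ℚ (ℚ ⊗[ℤ] A) ≤ n := by
    have e := IsLocalizedModule.rank_eq (nonZeroDivisors ℤ) le_rfl (TensorProduct.mk ℤ ℚ A 1)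
    exact ((IsFractionRing.rank_right_eq ℤ ℚ (ℚ ⊗[ℤ] A)).trans e).trans_le h1
  rw [← Module.rank_lt_aleph0_iff]
  exact h2.trans_lt Cardinal.natCast_lt_aleph0

theorem clear_denom {A : Type} [AddCommGroup A] (x : ℚ ⊗[ℤ] A) :
    ∃ (m : ℤ) (a : A), m ≠ 0 ∧ m • x = 1 ⊗ₜ a := by
  obtain ⟨⟨a, m⟩, h⟩ := IsLocalizedModule.surj (nonZeroDivisors ℤ) (TensorProduct.mk ℤ ℚ A 1) x
  exact ⟨m, a, nonZeroDivisors.ne_zero m.2, h⟩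

theorem inj_rat {A : Type} [AddCommGroup A] (htf : ∀ (m : ℤ) (a : A), m ≠ 0 → m • a = 0 → a = 0)
    (a : A) (h : (1 : ℚ) ⊗ₜ[ℤ] a = 0) : a = 0 := by
  obtain ⟨m, hm⟩ := (IsLocalizedModule.eq_zero_iff (nonZeroDivisors ℤ)
    (TensorProduct.mk ℤ ℚ A 1)).1 h
  exact htf m a (nonZeroDivisors.ne_zero m.2) hm

theorem core {R A B : Type} [CommRing R] [AddCommGroup A] [Module R A] [AddCommGroup B]
    [Module R B] (htA : ∀ (m : ℤ) (a : A), m ≠ 0 → m • a = 0 → a = 0)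
    (htB : ∀ (m : ℤ) (a : B), m ≠ 0 → m • a = 0 → a = 0)
    (hA : Module.Finite ℚ (ℚ ⊗[ℤ] A)) (hB : Module.Finite ℚ (ℚ ⊗[ℤ] B)) :
    (∃ (r : R) (m : ℤ), m ≠ 0 ∧ (∀ a : A, r • a = 0) ∧ ∀ b : B, r • b = m • b) ∨
    ∃ (a : A) (b : B), b ≠ 0 ∧ ∀ r : R, r • a = 0 ↔ r • b = 0 := by
  obtain ⟨φ, hφ⟩ := exists_ratAction R A
  obtain ⟨ψ, hψ⟩ := exists_ratAction R B
  let I := RingHom.ker φ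
  let J := RingHom.ker ψ
  by_cases hIJ : I ⊔ J = ⊤
  · left
    have h1 : (1 : ℚ ⊗[ℤ] R) ∈ I ⊔ J := hIJ ▸ trivial
    obtain ⟨s, hs, t, ht, hst⟩ := Submodule.mem_sup.1 h1
    obtain ⟨m, r, hm, hr⟩ := clear_denom s
    have hs' : φ s = 0 := hs
    have ht' : ψ t = 0 := ht
    refine ⟨r, m, hm, fun a => ?_, fun b => ?_⟩
    · apply inj_rat htA
      rw [← hφ, ← hr, map_zsmul, hs', smul_zero, LinearMap.zero_apply]
    · rw [← sub_eq_zero]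
      apply inj_rat htB
      have : s = 1 - t := by rw [← hst]; ring
      rw [TensorProduct.tmul_sub, ← hψ, ← hr, map_zsmul, this, map_sub, ht', map_one, sub_zero]
      simp
  · right
    obtain ⟨P, hP, hle⟩ := Ideal.exists_le_maximal _ hIJ
    have fin : ∀ {C : Type} [AddCommGroup C] [Module R C]
        (_ : ∀ (m : ℤ) (a : C), m ≠ 0 → m • a = 0 → a = 0)
        (_ : Module.Finite ℚ (ℚ ⊗[ℤ] C)) (χ : (ℚ ⊗[ℤ] R) →ₐ[ℚ] Module.End ℚ (ℚ ⊗[ℤ] C))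
        (_ : ∀ (r : R) (a : C), χ (1 ⊗ₜ r) (1 ⊗ₜ a) = 1 ⊗ₜ (r • a)) (_ : RingHom.ker χ ≤ P),
        ∃ c : C, c ≠ 0 ∧ ∀ r : R, r • c = 0 ↔ (1 ⊗ₜ r : ℚ ⊗[ℤ] R) ∈ P := by
      intro C _ _ ht hf χ hχ hker
      let : Module (ℚ ⊗[ℤ] R) (ℚ ⊗[ℤ] C) := Module.compHom _ χ.toRingHom
      have hsm : ∀ (s : ℚ ⊗[ℤ] R) (v : ℚ ⊗[ℤ] C), s • v = χ s v := fun _ _ => rfl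
      have : IsScalarTower ℚ (ℚ ⊗[ℤ] R) (ℚ ⊗[ℤ] C) := ⟨fun q s v => by
        rw [hsm, hsm, map_smul]; rfl⟩
      have : IsArtinian (ℚ ⊗[ℤ] R) (ℚ ⊗[ℤ] C) := isArtinian_of_tower ℚ inferInstance
      have : IsNoetherian (ℚ ⊗[ℤ] R) (ℚ ⊗[ℤ] C) := isNoetherian_of_tower ℚ inferInstance
      obtain ⟨v, hv0, hv⟩ := lemB (V := ℚ ⊗[ℤ] C) P hP (fun s hs => hker (by
        rw [RingHom.mem_ker]; exact LinearMap.ext hs))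
      obtain ⟨m, c, hm, hc⟩ := clear_denom v
      have inv : ∀ w : ℚ ⊗[ℤ] C, m • w = 0 → w = 0 := by
        intro w hw
        rw [← Int.cast_smul_eq_zsmul ℚ] at hw
        exact (smul_eq_zero.1 hw).resolve_left (by exact_mod_cast hm)
      refine ⟨c, ?_, fun r => ?_⟩
      · rintro rfl
        rw [TensorProduct.tmul_zero] at hc
        exact hv0 (inv _ hc)
      · rw [← hv, hsm]
        have e : (1 : ℚ) ⊗ₜ[ℤ] (r • c) = m • χ (1 ⊗ₜ r) v := by
          rw [← hχ, ← hc, map_zsmul]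
        constructor
        · intro h
          apply inv
          rw [← e, h, TensorProduct.tmul_zero]
        · intro h
          apply inj_rat ht
          rw [e, h, smul_zero]
    obtain ⟨a, _, ha⟩ := fin htA hA φ hφ (le_sup_left.trans hle)
    obtain ⟨b, hb0, hb⟩ := fin htB hB ψ hψ (le_sup_right.trans hle)
    exact ⟨a, b, hb0, fun r => (ha r).trans (hb r).symm⟩

end algebra

theorem leftDerived_bounded {C D : Type*} [Category C] [Category D] [Abelian C] [Abelian D]
    [HasProjectiveResolutions C] (F : C ⥤ D) [F.Additive] (η : ∀ X : C, X ⟶ X)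
    (nat : ∀ {X Y : C} (f : X ⟶ Y), f ≫ η Y = η X ≫ f)
    (hη : ∀ X, F.map (η X) = 0) (X : C) (m : ℤ) (hm : η X = m • 𝟙 X) (n : ℕ) :
    m • 𝟙 ((F.leftDerived n).obj X) = 0 := by
  let P := projectiveResolution X
  let g : P.complex ⟶ P.complex :=
    { f := fun i => η (P.complex.X i)
      comm' := fun i j _ => (nat (P.complex.d i j)).symm }
  have w : g ≫ P.π = P.π ≫ (ChainComplex.single₀ C).map (η X) := by
    ext
    have := nat (P.π.f 0)
    simpa [g] using this.symm
  have h := Functor.leftDerived_map_eq F n (η X) g w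
  have h0 : (F.mapHomologicalComplex (ComplexShape.down ℕ)).map g = 0 := by
    ext i
    exact hη _
  rw [Functor.comp_map, h0] at h
  have h' := Functor.leftDerived_map_eq F n (η X) (m • 𝟙 P.complex) (P := P) (Q := P) (by
    rw [hm]
    simp)
  rw [Functor.map_zsmul, CategoryTheory.Functor.map_id, Preadditive.zsmul_comp,
    Preadditive.comp_zsmul] at h'
  erw [Category.id_comp] at h'
  rw [Iso.hom_inv_id] at h'
  rw [← h', h]
  simp only [Functor.map_zero]
  erw [Limits.zero_comp, Limits.comp_zero]

section generic
variable {k G : Type} [CommRing k] [CommGroup G]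

/-- The action of a group ring element on a representation. -/
noncomputable def act (r : MonoidAlgebra k G) (A : Rep.{0} k G) (a : A) : A :=
  A.ρ.asAlgebraHom r a

/-- The module structure over the group ring. -/
@[reducible] noncomputable def actModule (A : Rep.{0} k G) : Module (MonoidAlgebra k G) A :=
  Module.compHom A A.ρ.asAlgebraHom.toRingHom

/-- The action of a group ring element on a representation, as a morphism. -/
noncomputable def repAct (r : MonoidAlgebra k G) (A : Rep.{0} k G) : A ⟶ A :=
  Rep.ofHom
    { toLinearMap := A.ρ.asAlgebraHom r
      isIntertwining' := fun g => by
        have h : A.ρ g = A.ρ.asAlgebraHom (MonoidAlgebra.of k G g) := by simp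
        rw [h]
        change A.ρ.asAlgebraHom r * _ = _ * A.ρ.asAlgebraHom r
        rw [← map_mul, ← map_mul, mul_comm] }

theorem repAct_apply (r : MonoidAlgebra k G) (A : Rep.{0} k G) (a : A) :
    (repAct r A).hom a = act r A a := rfl

theorem map_act (r : MonoidAlgebra k G) {A B : Rep.{0} k G}
    (f : A ⟶ B) (a : A) : f.hom (act r A a) = act r B (f.hom a) :=
  Rep.to_Module_monoidAlgebra_map_aux A.V B.V A.ρ B.ρ f.hom.toLinearMap f.hom.2 r a

theorem rep_hom_ext {A B : Rep.{0} k G} (f g : A ⟶ B) (h : ∀ a : A, f.hom a = g.hom a) :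
    f = g := by
  apply Rep.hom_ext
  exact DFunLike.ext _ _ h

theorem repAct_nat (r : MonoidAlgebra k G) {A B : Rep.{0} k G}
    (f : A ⟶ B) : f ≫ repAct r B = repAct r A ≫ f :=
  rep_hom_ext _ _ fun x => (map_act r f x).symm

theorem act_mul (r s : MonoidAlgebra k G) (A : Rep.{0} k G) (a : A) :
    act (r * s) A a = act r A (act s A a) := by
  simp [act]

theorem act_map_zero (r : MonoidAlgebra k G) (A : Rep.{0} k G) :
    act r A 0 = 0 := by
  simp [act]

theorem act_sub (r s : MonoidAlgebra k G) (A : Rep.{0} k G) (a : A) :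
    act (r - s) A a = act r A a - act s A a := by
  simp [act]

theorem act_map_zsmul (r : MonoidAlgebra k G) (m : ℤ) (A : Rep.{0} k G) (a : A) :
    act r A (m • a) = m • act r A a := by
  simp [act]

theorem act_intCast (m : ℤ) (A : Rep.{0} k G) (a : A) :
    act (m : MonoidAlgebra k G) A a = m • a := by
  unfold act
  rw [map_intCast]
  simp

theorem act_of (g : G) (A : Rep.{0} k G) (a : A) :
    act (MonoidAlgebra.of k G g) A a = A.ρ g a := by
  simp [act]

end generic

theorem final {G : Type} [CommGroup G] (A Y : Rep.{0} ℤ G) (r : MonoidAlgebra ℤ G) (m : ℤ)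
    (hm : m ≠ 0) (hA : ∀ a : A, act r A a = 0)
    (hY : ∀ y : Y, act r Y y = m • y) (n : ℕ) :
    ZBounded (((Ext ℤ (Rep ℤ G) n).obj (Opposite.op A)).obj Y) ∧
    ZBounded (((Tor (ModuleCat (MonoidAlgebra ℤ G)) n).obj (toMod A)).obj (toMod Y)) := by
  constructor
  · refine ⟨m, hm, ?_⟩
    have h1 : repAct ((m : MonoidAlgebra ℤ G) - r) Y = 0 := by
      apply rep_hom_ext
      intro y
      rw [repAct_apply, act_sub, act_intCast, hY, sub_self]
      rfl
    have h2 : repAct ((m : MonoidAlgebra ℤ G) - r) A = m • 𝟙 A := by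
      apply rep_hom_ext
      intro a
      rw [repAct_apply, act_sub, act_intCast, hA, sub_zero]
      rfl
    have h := leftDerived_bounded ((linearYoneda ℤ (Rep ℤ G)).obj Y).rightOp
      (fun X => repAct ((m : MonoidAlgebra ℤ G) - r) X) (fun f => repAct_nat _ f)
      (fun X => by
        apply Quiver.Hom.unop_inj
        refine ModuleCat.hom_ext (LinearMap.ext fun f => ?_)
        change repAct _ X ≫ (show X ⟶ Y from f) = 0
        rw [← repAct_nat, h1, Limits.comp_zero]) A m h2 n
    intro a
    have h2 := congrArg Quiver.Hom.unop h
    exact ConcreteCategory.congr_hom h2 a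
  · refine ⟨m, hm, ?_⟩
    have h := leftDerived_bounded ((MonoidalCategory.tensoringLeft
      (ModuleCat (MonoidAlgebra ℤ G))).obj (toMod A))
      (fun X => r • 𝟙 X) (fun f => by simp)
      (fun X => by
        have : (r • 𝟙 (toMod A)) = 0 := by
          refine ModuleCat.hom_ext (LinearMap.ext fun a => ?_)
          exact hA a
        change MonoidalCategory.whiskerLeft (toMod A) (r • 𝟙 X) = 0
        rw [MonoidalLinear.whiskerLeft_smul, MonoidalCategory.whiskerLeft_id,
          ← MonoidalCategory.id_whiskerRight, ← MonoidalLinear.smul_whiskerRight, this]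
        simp) (toMod Y) m (by
          refine ModuleCat.hom_ext (LinearMap.ext fun a => ?_)
          exact hY a) n
    intro a
    exact ConcreteCategory.congr_hom h a

theorem section_of_injective {S T : Type} [Group S] [Group T] (f : S →* T)
    (hf : Function.Injective f) (p : ℕ) (h : HasQuasicyclicSection S p) :
    HasQuasicyclicSection T p := by
  obtain ⟨H, K, hK, ⟨e⟩⟩ := h
  let φ : H ≃* H.map f := H.equivMapOfInjective f hf
  have hK' : (K.map φ.toMonoidHom).Normal := hK.map _ φ.surjective
  exact ⟨H.map f, K.map φ.toMonoidHom, hK',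
    ⟨(QuotientGroup.congr K (K.map φ.toMonoidHom) φ rfl).symm.trans e⟩⟩

theorem tf_of {A : Type} [AddCommGroup A] (h : AddMonoid.IsTorsionFree A) (m : ℤ) (a : A)
    (hm : m ≠ 0) (hma : m • a = 0) : a = 0 := by
  by_contra ha
  exact h a ha (isOfFinAddOrder_iff_zsmul_eq_zero.2 ⟨m, hm, hma⟩)

/-- The key property: some group ring element kills `A` and acts on `B` as a nonzero integer. -/
theorem exists_separator {G : Type} [CommGroup G] (π : Set ℕ)
    (B : Rep ℤ G) (htf : AddMonoid.IsTorsionFree (B : Type))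
    (hfr : FiniteRankAbelian (B : Type))
    (hsub : ∀ S : AddSubgroup (B : Type), (∀ (g : G), ∀ b ∈ S, B.ρ g b ∈ S) →
      S ≠ ⊥ → ¬ (addSpectrum S ⊆ π))
    (A : Rep ℤ G) (hA : MemC G π A) :
    ∃ (r : MonoidAlgebra ℤ G) (m : ℤ), m ≠ 0 ∧ (∀ a : A, act r A a = 0) ∧
      ∀ b : B, act r B b = m • b := by
  induction hA with
  | of_finite A h =>
    refine ⟨((Nat.card A : ℤ) : MonoidAlgebra ℤ G), (Nat.card A : ℤ), ?_, fun a => ?_,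
      fun b => act_intCast _ _ _⟩
    · exact_mod_cast Nat.card_pos.ne'
    · rw [act_intCast, natCast_zsmul]
      exact card_nsmul_eq_zero'
  | of_nice A h =>
    obtain ⟨htA, hfA, hsA⟩ := h
    obtain ⟨nA, hnA⟩ := hfA.1
    obtain ⟨nB, hnB⟩ := hfr.1
    let iA : Module (MonoidAlgebra ℤ G) A := actModule A
    let iB : Module (MonoidAlgebra ℤ G) B := actModule B
    have sA : ∀ (r : MonoidAlgebra ℤ G) (a : A), r • a = act r A a := fun _ _ => rfl
    have sB : ∀ (r : MonoidAlgebra ℤ G) (b : B), r • b = act r B b := fun _ _ => rfl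
    rcases core (R := MonoidAlgebra ℤ G) (tf_of htA) (tf_of htf) (finite_rat nA hnA)
      (finite_rat nB hnB) with h | ⟨a, b, hb, hab⟩
    · exact h
    · exfalso
      let S : Submodule (MonoidAlgebra ℤ G) B := Submodule.span _ {b}
      refine hsub S.toAddSubgroup ?_ ?_ ?_
      · intro g x hx
        rw [← act_of, ← sB]
        exact S.smul_mem _ hx
      · intro h0
        have : b ∈ S.toAddSubgroup := Submodule.mem_span_singleton_self b
        rw [h0] at this
        exact hb this
      · have hch : ∀ x : S, ∃ r : MonoidAlgebra ℤ G, r • b = x := fun x =>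
          Submodule.mem_span_singleton.1 x.2
        choose c hc using hch
        have hval : ∀ (x : S) (r : MonoidAlgebra ℤ G), r • b = x → r • a = c x • a := by
          intro x r hr
          rw [← sub_eq_zero, ← sub_smul, hab, sub_smul, hr, hc, sub_self]
        let f : S →+ A := AddMonoidHom.mk' (fun x => c x • a) (fun x y => by
          rw [← add_smul]
          refine (hval (x + y) _ ?_).symm
          rw [add_smul, hc, hc]
          rfl)
        have hf : Function.Injective f := by
          rw [injective_iff_map_eq_zero]
          intro x hx
          have : c x • b = 0 := (hab _).1 hx
          rw [hc] at this
          exact Subtype.ext this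
        rintro p ⟨hp, hsec⟩
        exact hsA ⟨hp, section_of_injective (S := Multiplicative S)
          (AddMonoidHom.toMultiplicative f) hf p hsec⟩
  | quot A C f hf hA ih =>
    obtain ⟨r, m, hm, h1, h2⟩ := ih
    refine ⟨r, m, hm, fun x => ?_, h2⟩
    obtain ⟨a, rfl⟩ := hf x
    rw [← map_act, h1, map_zero]
  | ext A C D f g hinj hsurj hexact hA hC ihA ihC =>
    obtain ⟨r, m, hm, h1, h2⟩ := ihA
    obtain ⟨r', m', hm', h1', h2'⟩ := ihC
    refine ⟨r * r', m' * m, mul_ne_zero hm' hm, fun x => ?_, fun b => ?_⟩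
    · rw [act_mul]
      have : g.hom (act r' C x) = 0 := by rw [map_act, h1']
      obtain ⟨a, ha⟩ := (hexact _).1 this
      rw [← ha, ← map_act, h1, map_zero]
    · rw [act_mul, h2', act_map_zsmul, h2, mul_smul]

/-- Let `π` be a set of primes and `G` an abelian group.  Let `B` be a
`ℤG`-module whose underlying additive group is torsion-free of finite rank,
with no nontrivial `ℤG`-submodule whose underlying abelian group is
`π`-spectral.  If `A` is a `ℤG`-module belonging to `𝔠(G, π)` and `B̄` is a
`ℤG`-module quotient of `B` (realized by a surjection `q : B ⟶ Bbar`), then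
`Ext^n_{ℤG}(A, B̄)` and `Tor_n^{ℤG}(A, B̄)` are bounded `ℤ`-modules for all
`n ≥ 0`. -/
theorem ext_tor_bounded_of_memC (G : Type) [CommGroup G] (π : Set ℕ)
    (B : Rep ℤ G) (htf : AddMonoid.IsTorsionFree (B : Type))
    (hfr : FiniteRankAbelian (B : Type))
    (hsub : ∀ S : AddSubgroup (B : Type), (∀ (g : G), ∀ b ∈ S, B.ρ g b ∈ S) →
      S ≠ ⊥ → ¬ (addSpectrum S ⊆ π))
    (A : Rep ℤ G) (hA : MemC G π A)
    (Bbar : Rep ℤ G) (q : B ⟶ Bbar) (hq : Function.Surjective q.hom) (n : ℕ) :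
    ZBounded (((Ext ℤ (Rep ℤ G) n).obj (Opposite.op A)).obj Bbar) ∧
    ZBounded (((Tor (ModuleCat (MonoidAlgebra ℤ G)) n).obj (toMod A)).obj
      (toMod Bbar)) := by
  obtain ⟨r, m, hm, h1, h2⟩ := exists_separator π B htf hfr hsub A hA
  refine final A Bbar r m hm h1 (fun y => ?_) n
  obtain ⟨b, rfl⟩ := hq y
  rw [← map_act, h2, map_zsmul]
end
end
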